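/- Let H, H' ⊆ V be subspaces with dim H = dim H' and dim(H ∩ H^⊥) = dim(H' ∩ H'^⊥). Then there exists an isometry g of V (a linear automorphism preserving ⟨−,−⟩) such that g(H) = H'. -/

import Mathlib

/-!
Every injective isometry from a possibly degenerate space `X` into a nondegenerate space `V` extends
to the hull of `X`, the nondegenerate space obtained by adjoining an isotropic dual of the radical
of `X`: a dual of the radical in `V` becomes isotropic after subtracting half of its own pairing.
The image of the hull splits off as an orthogonal summand. Over an algebraically closed field
nondegenerate `ε`-symmetric forms are classified by their dimension, so the orthogonals of two
such images are equivalent, and gluing gives Witt's extension theorem. On the other hand a form is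
the orthogonal sum of its radical and a nondegenerate form, so `H` and `H'` are isometric as soon
as their dimensions and the dimensions of their radicals agree; extend this isometry to `V`.
-/

open Module

/-- Left orthogonal complement `H^⊥ = {v | ⟨v,w⟩ = 0 for all w ∈ H}` of a subspace with
respect to a bilinear form. -/
def bperp {V : Type*} [AddCommGroup V] [Module ℂ V]
    (B : V →ₗ[ℂ] V →ₗ[ℂ] ℂ) (H : Submodule ℂ V) : Submodule ℂ V where
  carrier := {v | ∀ w ∈ H, B v w = 0}
  add_mem' := by
    intro a b ha hb w hw
    rw [map_add, LinearMap.add_apply, ha w hw, hb w hw, add_zero]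
  zero_mem' := by
    intro w hw
    simp
  smul_mem' := by
    intro c a ha w hw
    rw [map_smul, LinearMap.smul_apply, ha w hw, smul_zero]

open LinearMap LinearMap.BilinForm
open LinearMap (BilinForm)

section

variable {K : Type*} [Field K] {E V V' X : Type*}
  [AddCommGroup E] [Module K E] [AddCommGroup V] [Module K V] [AddCommGroup V'] [Module K V']
  [AddCommGroup X] [Module K X]

/-- `ε`-symmetry of a bilinear form: symmetry for `ε = 1`, skew-symmetry for `ε = -1`. -/
def IsEpsilonSymm (ε : K) (B : BilinForm K V) : Prop :=
  ∀ v w, B v w = ε * B w v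

namespace IsEpsilonSymm

variable {ε : K} {B : BilinForm K V}

lemma isRefl (hB : IsEpsilonSymm ε B) : B.IsRefl :=
  fun v w h => by rw [hB, h, mul_zero]

lemma restrict (hB : IsEpsilonSymm ε B) (W : Submodule K V) : IsEpsilonSymm ε (B.restrict W) :=
  fun v w => hB v w

lemma isSymm (hB : IsEpsilonSymm 1 B) : B.IsSymm :=
  ⟨fun v w => by rw [hB, one_mul]⟩

lemma isAlt [Invertible (2 : K)] (hB : IsEpsilonSymm (-1) B) : B.IsAlt := fun v => by
  have hv : 2 * B v v = 0 := by linear_combination hB v v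
  simpa [Invertible.ne_zero] using hv

end IsEpsilonSymm

section Isometry

variable {B : BilinForm K V} {B' : BilinForm K V'} {G : BilinForm K E}

/-- The inclusion of a subspace as an isometry from the restricted form. -/
def subtypeIsometry (B : BilinForm K V) (W : Submodule K V) : B.restrict W →bᵢ B :=
  { W.subtype with map_app' := fun _ _ => rfl }

/-- The isometry `a ↦ a • v` onto the line of an isotropic vector. -/
def lineIsometry (hB : B.IsAlt) (v : V) : (0 : BilinForm K K) →bᵢ B :=
  { LinearMap.toSpanSingleton K V v with map_app' := fun a c => by simp [hB v] }

lemma isometry_injective (hG : G.Nondegenerate) (T : G →bᵢ B) : Function.Injective T := by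
  refine (injective_iff_map_eq_zero T).2 fun x hx => hG.1 x fun y => ?_
  rw [← T.map_app, hx, map_zero, LinearMap.zero_apply]

/-- An injective isometry as an isometric equivalence onto its range. -/
noncomputable def isometryEquivRange (T : G →bᵢ B) (hT : Function.Injective T) :
    G.IsometryEquiv (B.restrict T.range) :=
  { LinearEquiv.ofInjective T.toLinearMap hT with map_app' := T.map_app }

lemma exists_isometryEquiv_of_isCompl {W U : Submodule K V} {W' U' : Submodule K V'}
    (hB : B.IsRefl) (hB' : B'.IsRefl) (hWU : IsCompl W U) (hWU' : IsCompl W' U')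
    (hU : U ≤ B.orthogonal W) (hU' : U' ≤ B'.orthogonal W')
    (e : (B.restrict W).IsometryEquiv (B'.restrict W'))
    (f : (B.restrict U).IsometryEquiv (B'.restrict U')) :
    ∃ g : B.IsometryEquiv B', ∀ w : W, g w = e w := by
  let Φ := W.prodEquivOfIsCompl U hWU
  let Φ' := W'.prodEquivOfIsCompl U' hWU'
  have form_add (w₁ w₂ : W) (u₁ u₂ : U) : B (w₁ + u₁) (w₂ + u₂) = B w₁ w₂ + B u₁ u₂ := by
    simp [hU u₂.2 w₁ w₁.2, hB _ _ (hU u₁.2 w₂ w₂.2)]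
  have form_add' (w₁ w₂ : W') (u₁ u₂ : U') :
      B' (w₁ + u₁) (w₂ + u₂) = B' w₁ w₂ + B' u₁ u₂ := by
    simp [hU' u₂.2 w₁ w₁.2, hB' _ _ (hU' u₁.2 w₂ w₂.2)]
  let g := Φ.symm.trans ((e.toLinearEquiv.prodCongr f.toLinearEquiv).trans Φ')
  have g_add (w : W) (u : U) : g (w + u) = e w + f u := by
    have hΦ : (w + u : V) = Φ (w, u) := by simp [Φ]
    simp [g, hΦ, Φ']
  refine ⟨{ g with map_app' := fun v₁ v₂ => ?_ }, fun w => ?_⟩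
  · obtain ⟨⟨w₁, u₁⟩, rfl⟩ := Φ.surjective v₁
    obtain ⟨⟨w₂, u₂⟩, rfl⟩ := Φ.surjective v₂
    change B' (g (w₁ + u₁)) (g (w₂ + u₂)) = B (w₁ + u₁) (w₂ + u₂)
    rw [g_add, g_add, form_add, form_add']
    exact congrArg₂ (· + ·) (e.map_app w₂ w₁) (f.map_app u₂ u₁)
  · change g w = e w
    simpa using g_add w 0

end Isometry

section OrthogonalOfRange

variable {B : BilinForm K V} {B' : BilinForm K V'} {G : BilinForm K E} [FiniteDimensional K V]
  [FiniteDimensional K V']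

lemma isCompl_range_orthogonal (hG : G.Nondegenerate) (hB : B.IsRefl) (T : G →bᵢ B) :
    IsCompl T.range (B.orthogonal T.range) := by
  refine (isCompl_orthogonal_iff_disjoint hB).2 (Submodule.disjoint_def.2 ?_)
  rintro _ ⟨x, rfl⟩ hx
  have hx0 : x = 0 := hG.2 x fun y => (T.map_app y x).symm.trans (hx (T y) ⟨y, rfl⟩)
  rw [hx0, map_zero]

lemma nondegenerate_restrict_orthogonal_range (hG : G.Nondegenerate) (hB : B.IsRefl)
    (hBn : B.Nondegenerate) (T : G →bᵢ B) :
    (B.restrict (B.orthogonal T.range)).Nondegenerate := by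
  rw [restrict_nondegenerate_iff_isCompl_orthogonal hB, orthogonal_orthogonal hBn hB]
  exact (isCompl_range_orthogonal hG hB T).symm

lemma finrank_add_finrank_orthogonal_range (hG : G.Nondegenerate) (hB : B.IsRefl) (T : G →bᵢ B) :
    finrank K E + finrank K (B.orthogonal T.range) = finrank K V := by
  rw [← LinearMap.finrank_range_of_inj (f := T.toLinearMap) (isometry_injective hG T)]
  exact Submodule.finrank_add_eq_of_isCompl (isCompl_range_orthogonal hG hB T)

lemma exists_isometryEquiv_apply_eq_of_equivalent_orthogonal (hG : G.Nondegenerate)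
    (hB : B.IsRefl) (hB' : B'.IsRefl) (T : G →bᵢ B) (T' : G →bᵢ B')
    (h : (B.restrict (B.orthogonal T.range)).Equivalent
      (B'.restrict (B'.orthogonal T'.range))) :
    ∃ g : B.IsometryEquiv B', ∀ x, g (T x) = T' x := by
  obtain ⟨f⟩ := h
  let e := isometryEquivRange T (isometry_injective hG T)
  let e' := isometryEquivRange T' (isometry_injective hG T')
  obtain ⟨g, hg⟩ := exists_isometryEquiv_of_isCompl hB hB' (isCompl_range_orthogonal hG hB T)
    (isCompl_range_orthogonal hG hB' T') le_rfl le_rfl (e.symm.trans e') f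
  refine ⟨g, fun x => (hg (e x)).trans ?_⟩
  exact congrArg (fun y => (e' y : V')) (e.toLinearEquiv.symm_apply_apply x)

end OrthogonalOfRange

section Radical

variable {B : BilinForm K V}

lemma ker_le_orthogonal (hB : B.IsRefl) (W : Submodule K V) : B.ker ≤ B.orthogonal W :=
  (orthogonal_top_eq_ker hB).ge.trans (orthogonal_le le_top)

lemma nondegenerate_restrict_of_isCompl_ker (hB : B.IsRefl) {N : Submodule K V}
    (hN : IsCompl N B.ker) : (B.restrict N).Nondegenerate := by
  refine (hB.domRestrict N).nondegenerate_iff_separatingLeft.2 <|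
    separatingLeft_iff_ker_eq_bot.2 ?_
  have hker : (B.restrict N).ker = B.ker.comap N.subtype :=
    ker_restrict_eq_of_codisjoint hN.codisjoint fun v hv w hw => ker_le_orthogonal hB N hw v hv
  rw [← Submodule.disjoint_iff_comap_eq_bot.1 hN.disjoint]
  exact hker

lemma map_subtype_ker_restrict (hB : B.IsRefl) (H : Submodule K V) :
    (B.restrict H).ker.map H.subtype = H ⊓ B.orthogonal H := by
  refine le_antisymm ?_ (inf_orthogonal_self_le_ker_restrict hB)
  rintro _ ⟨r, hr, rfl⟩
  exact ⟨r.2, fun w hw => hB _ _ (LinearMap.congr_fun (mem_ker.1 hr) ⟨w, hw⟩)⟩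

lemma finrank_ker_restrict (hB : B.IsRefl) (H : Submodule K V) :
    finrank K (B.restrict H).ker = finrank K ↥(H ⊓ B.orthogonal H) := by
  rw [← map_subtype_ker_restrict hB, Submodule.finrank_map_subtype_eq]

end Radical

section Hull

variable {ε : K} {b : BilinForm K X} {B : BilinForm K V} {B' : BilinForm K V'}

/-- The form `⟨(x, f), (y, g)⟩ = ⟨x, y⟩ + g (π x) + ε f (π y)` on `X × (ker b)^*`: the given form
on `X`, with an isotropic dual of its radical adjoined along `π`. It is meant for a retraction `π`
of `X` onto the radical, in which case `ε`-symmetry of `b` makes it nondegenerate. -/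
def hullForm (ε : K) (b : BilinForm K X) (π : X →ₗ[K] b.ker) :
    BilinForm K (X × Dual K b.ker) :=
  LinearMap.mk₂ K (fun p q => b p.1 q.1 + q.2 (π p.1) + ε * p.2 (π q.1))
    (by intros; simp; ring) (by intros; simp; ring) (by intros; simp; ring) (by intros; simp; ring)

lemma hullForm_apply (π : X →ₗ[K] b.ker) (p q : X × Dual K b.ker) :
    hullForm ε b π p q = b p.1 q.1 + q.2 (π p.1) + ε * p.2 (π q.1) :=
  rfl

lemma IsEpsilonSymm.hullForm (hε : ε * ε = 1) (hb : IsEpsilonSymm ε b) (π : X →ₗ[K] b.ker) :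
    IsEpsilonSymm ε (hullForm ε b π) := fun p q => by
  rw [hullForm_apply, hullForm_apply]
  linear_combination hb p.1 q.1 - q.2 (π p.1) * hε

lemma nondegenerate_hullForm (hε : ε * ε = 1) (hb : IsEpsilonSymm ε b) {π : X →ₗ[K] b.ker}
    (hπ : ∀ r : b.ker, π r = r) : (hullForm ε b π).Nondegenerate := by
  refine (hb.hullForm hε π).isRefl.nondegenerate_iff_separatingLeft.2 ?_
  rintro ⟨x, f⟩ h
  have hπx : π x = 0 :=
    (Module.forall_dual_apply_eq_zero_iff K (π x)).1 fun g => by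
      simpa [hullForm_apply] using h (0, g)
  have hf : f = 0 := LinearMap.ext fun r => by
    have hxr : b x r = 0 := hb.isRefl _ _ (by rw [mem_ker.1 r.2, LinearMap.zero_apply])
    simpa [hullForm_apply, hxr, hπ, left_ne_zero_of_mul_eq_one hε] using h (r, 0)
  have hx : x ∈ b.ker := mem_ker.2 <| LinearMap.ext fun y => by
    simpa [hullForm_apply, hf] using h (y, 0)
  have hx0 : x = 0 := by simpa [hπx] using congrArg Subtype.val (hπ ⟨x, hx⟩).symm
  rw [hx0, hf, Prod.mk_zero_zero]

variable [FiniteDimensional K V] [FiniteDimensional K V']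

lemma exists_represents_dual (hB : B.Nondegenerate) {j : X →ₗ[K] V} (hj : Function.Injective j)
    {M : Type*} [AddCommGroup M] [Module K M] (F : M →ₗ[K] Dual K X) :
    ∃ t : M →ₗ[K] V, ∀ m x, B (j x) (t m) = F m x := by
  have hsurj : Function.Surjective (j.dualMap ∘ₗ B.flip) :=
    (LinearMap.dualMap_surjective_of_injective hj).comp (BilinForm.toDual B.flip hB.flip).surjective
  obtain ⟨t, ht⟩ := LinearMap.exists_rightInverse_of_surjective _ (range_eq_top.2 hsurj)
  exact ⟨t ∘ₗ F, fun m x => LinearMap.congr_fun (LinearMap.congr_fun ht (F m)) x⟩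

variable [Invertible (2 : K)]

lemma exists_isotropic_dual (hBn : B.Nondegenerate) (hB : IsEpsilonSymm ε B) (j : b →bᵢ B)
    (hj : Function.Injective j) (π : X →ₗ[K] b.ker) (hπ : ∀ r : b.ker, π r = r) :
    ∃ s : Dual K b.ker →ₗ[K] V,
      (∀ f x, B (j x) (s f) = f (π x)) ∧ ∀ f g, B (s f) (s g) = 0 := by
  obtain ⟨t, ht⟩ := exists_represents_dual hBn (j := j.toLinearMap) hj π.dualMap
  have := Module.Finite.of_injective j.toLinearMap hj
  -- `φ f` represents `⟨t f, t -⟩`; subtracting half of it from `t f` makes the section isotropic.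
  let φ : Dual K b.ker →ₗ[K] b.ker := (evalEquiv K b.ker).symm.toLinearMap ∘ₗ B.compl₁₂ t t
  have hφ (f g : Dual K b.ker) : g (φ f) = B (t f) (t g) := by simp [φ]
  have j_ker (r : b.ker) (x : X) : B (j r) (j x) = 0 := by
    rw [j.map_app, mem_ker.1 r.2, LinearMap.zero_apply]
  have t_ker (r : b.ker) (f : Dual K b.ker) : B (j r) (t f) = f r :=
    (ht f r).trans (congrArg f (hπ r))
  let s : Dual K b.ker →ₗ[K] V := t - (⅟2 : K) • j.toLinearMap ∘ₗ b.ker.subtype ∘ₗ φ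
  have hs (f : Dual K b.ker) : s f = t f - (⅟2 : K) • j (φ f) := rfl
  refine ⟨s, fun f x => ?_, fun f g => ?_⟩
  · rw [hs, map_sub, map_smul, hB.isRefl _ _ (j_ker (φ f) x), smul_zero, sub_zero]
    exact ht f x
  · have h_right : B (t f) (j (φ g)) = B (t f) (t g) := by rw [hB, t_ker, hφ, ← hB]
    have h_left : B (j (φ f)) (t g) = B (t f) (t g) := by rw [t_ker, hφ]
    simp only [hs, map_sub, map_smul, LinearMap.sub_apply, LinearMap.smul_apply, smul_eq_mul,
      h_right, h_left, j_ker]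
    linear_combination -B (t f) (t g) * invOf_mul_self (2 : K)

lemma exists_hullForm_isometry (hBn : B.Nondegenerate) (hB : IsEpsilonSymm ε B) (j : b →bᵢ B)
    (hj : Function.Injective j) (π : X →ₗ[K] b.ker) (hπ : ∀ r : b.ker, π r = r) :
    ∃ T : hullForm ε b π →bᵢ B, ∀ x, T (x, 0) = j x := by
  obtain ⟨s, hjs, hss⟩ := exists_isotropic_dual hBn hB j hj π hπ
  refine ⟨{ j.toLinearMap.coprod s with map_app' := fun p q => ?_ }, fun x => ?_⟩
  · change B (j p.1 + s p.2) (j q.1 + s q.2) = _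
    simp only [map_add, LinearMap.add_apply, hullForm_apply, j.map_app, hjs, hss, add_zero,
      hB (s p.2) (j q.1)]
    ring
  · change j x + s 0 = j x
    rw [map_zero, add_zero]

lemma exists_isometryEquiv_apply_eq_of_equivalent_restrict (hε : ε * ε = 1)
    (hB : IsEpsilonSymm ε B) (hB' : IsEpsilonSymm ε B') (hBn : B.Nondegenerate)
    (hBn' : B'.Nondegenerate) (hdim : finrank K V = finrank K V') (j : b →bᵢ B) (j' : b →bᵢ B')
    (hj : Function.Injective j) (hj' : Function.Injective j')
    (h : ∀ (W : Submodule K V) (W' : Submodule K V'), (B.restrict W).Nondegenerate →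
      (B'.restrict W').Nondegenerate → finrank K W = finrank K W' →
      finrank K X + finrank K W ≤ finrank K V → (B.restrict W).Equivalent (B'.restrict W')) :
    ∃ g : B.IsometryEquiv B', ∀ x, g (j x) = j' x := by
  have := Module.Finite.of_injective j.toLinearMap hj
  have hb : IsEpsilonSymm ε b := fun x y => by rw [← j.map_app, ← j.map_app, hB]
  obtain ⟨π, hπ⟩ := LinearMap.exists_leftInverse_of_injective b.ker.subtype b.ker.ker_subtype
  have hπ' (r : b.ker) : π r = r := LinearMap.congr_fun hπ r
  have hG := nondegenerate_hullForm hε hb hπ'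
  obtain ⟨T, hT⟩ := exists_hullForm_isometry hBn hB j hj π hπ'
  obtain ⟨T', hT'⟩ := exists_hullForm_isometry hBn' hB' j' hj' π hπ'
  have hr := finrank_add_finrank_orthogonal_range hG hB.isRefl T
  have hr' := finrank_add_finrank_orthogonal_range hG hB'.isRefl T'
  have hequiv := h _ _ (nondegenerate_restrict_orthogonal_range hG hB.isRefl hBn T)
    (nondegenerate_restrict_orthogonal_range hG hB'.isRefl hBn' T') (by omega)
    (by rw [Module.finrank_prod] at hr; omega)
  obtain ⟨g, hg⟩ := exists_isometryEquiv_apply_eq_of_equivalent_orthogonal hG hB.isRefl hB'.isRefl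
    T T' hequiv
  exact ⟨g, fun x => by rw [← hT, ← hT', hg]⟩

end Hull

section Classification

variable {ε : K} {B : BilinForm K V} {B' : BilinForm K V'} [Invertible (2 : K)]
  [FiniteDimensional K V] [FiniteDimensional K V']

lemma equivalent_of_isSymm [IsAlgClosed K] (hsymm : B.IsSymm) (hsymm' : B'.IsSymm)
    (hB : B.Nondegenerate) (hB' : B'.Nondegenerate) (hdim : finrank K V = finrank K V') :
    B.Equivalent B' := by
  let ψ : V ≃ₗ[K] V' := LinearEquiv.ofFinrankEq V V' hdim
  let C : BilinForm K V := B'.comp ψ ψ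
  have hC : C.IsSymm := ⟨fun v w => hsymm'.eq (ψ v) (ψ w)⟩
  have hCn : C.SeparatingLeft := fun v hv => ψ.map_eq_zero_iff.1 <| hB'.1 _ fun w => by
    simpa [C] using hv (ψ.symm w)
  have polar_apply {A : BilinForm K V} (hA : A.IsSymm) (v w : V) :
      QuadraticMap.associated A.toQuadraticMap v w = A v w := by
    rw [QuadraticMap.associated_left_inverse K hA.eq]
  obtain ⟨e⟩ := QuadraticForm.equivalent_of_isAlgClosed B.toQuadraticMap C.toQuadraticMap
    (fun v hv => hB.1 v fun w => polar_apply hsymm v w ▸ hv w)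
    (fun v hv => hCn v fun w => polar_apply hC v w ▸ hv w)
  refine ⟨{ e.toLinearEquiv.trans ψ with map_app' := fun v w => ?_ }⟩
  change C (e v) (e w) = B v w
  rw [← polar_apply hC, ← polar_apply hsymm]
  simp only [QuadraticMap.associated_apply, ← map_add, e.map_app]

lemma equivalent_of_skewSymm (hB : IsEpsilonSymm (-1) B) (hB' : IsEpsilonSymm (-1) B')
    (hBn : B.Nondegenerate) (hBn' : B'.Nondegenerate) (hdim : finrank K V = finrank K V') :
    B.Equivalent B' := by
  induction hn : finrank K V using Nat.strong_induction_on generalizing V V' with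
  | _ n ih =>
  let ψ : V ≃ₗ[K] V' := LinearEquiv.ofFinrankEq V V' hdim
  rcases subsingleton_or_nontrivial V with hV | hV
  · exact ⟨{ ψ with map_app' := fun v w => by simp [Subsingleton.elim v 0] }⟩
  obtain ⟨v, hv⟩ := exists_ne (0 : V)
  obtain ⟨g, -⟩ := exists_isometryEquiv_apply_eq_of_equivalent_restrict (by ring) hB hB' hBn hBn'
    hdim (lineIsometry hB.isAlt v) (lineIsometry hB'.isAlt (ψ v)) (smul_left_injective K hv)
    (smul_left_injective K (ψ.map_ne_zero_iff.2 hv)) fun W W' hW hW' hWW' hle =>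
      ih _ (by rw [finrank_self] at hle; omega) (hB.restrict W) (hB'.restrict W') hW hW' hWW' rfl
  exact ⟨g⟩

lemma equivalent_of_nondegenerate [IsAlgClosed K] (hε : ε = 1 ∨ ε = -1)
    (hB : IsEpsilonSymm ε B) (hB' : IsEpsilonSymm ε B') (hBn : B.Nondegenerate)
    (hBn' : B'.Nondegenerate) (hdim : finrank K V = finrank K V') : B.Equivalent B' := by
  rcases hε with rfl | rfl
  · exact equivalent_of_isSymm hB.isSymm hB'.isSymm hBn hBn' hdim
  · exact equivalent_of_skewSymm hB hB' hBn hBn' hdim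

lemma equivalent_of_finrank_ker_eq [IsAlgClosed K] (hε : ε = 1 ∨ ε = -1)
    (hB : IsEpsilonSymm ε B) (hB' : IsEpsilonSymm ε B') (hdim : finrank K V = finrank K V')
    (hker : finrank K B.ker = finrank K B'.ker) : B.Equivalent B' := by
  obtain ⟨N, hN⟩ := exists_isCompl B.ker
  obtain ⟨N', hN'⟩ := exists_isCompl B'.ker
  have hNdim := Submodule.finrank_add_eq_of_isCompl hN
  have hNdim' := Submodule.finrank_add_eq_of_isCompl hN'
  obtain ⟨e⟩ := equivalent_of_nondegenerate hε (hB.restrict N) (hB'.restrict N')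
    (nondegenerate_restrict_of_isCompl_ker hB.isRefl hN.symm)
    (nondegenerate_restrict_of_isCompl_ker hB'.isRefl hN'.symm) (by omega)
  let f : (B.restrict B.ker).IsometryEquiv (B'.restrict B'.ker) :=
    { LinearEquiv.ofFinrankEq B.ker B'.ker hker with
      map_app' := fun r s => by simp [mem_ker.1 r.2] }
  obtain ⟨g, -⟩ := exists_isometryEquiv_of_isCompl hB.isRefl hB'.isRefl hN.symm hN'.symm
    (ker_le_orthogonal hB.isRefl N) (ker_le_orthogonal hB'.isRefl N') e f
  exact ⟨g⟩

end Classification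

section Extension

variable [IsAlgClosed K] [Invertible (2 : K)] [FiniteDimensional K V] [FiniteDimensional K V']
  {ε : K} {B : BilinForm K V} {B' : BilinForm K V'}

/-- Witt's extension theorem. -/
lemma exists_isometryEquiv_apply_eq {b : BilinForm K X}
    (hε : ε = 1 ∨ ε = -1) (hB : IsEpsilonSymm ε B) (hB' : IsEpsilonSymm ε B')
    (hBn : B.Nondegenerate) (hBn' : B'.Nondegenerate) (hdim : finrank K V = finrank K V')
    (j : b →bᵢ B) (j' : b →bᵢ B') (hj : Function.Injective j) (hj' : Function.Injective j') :
    ∃ g : B.IsometryEquiv B', ∀ x, g (j x) = j' x :=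
  exists_isometryEquiv_apply_eq_of_equivalent_restrict (mul_self_eq_one_iff.2 hε) hB hB' hBn hBn'
    hdim j j' hj hj' fun W W' hW hW' hWW' _ =>
      equivalent_of_nondegenerate hε (hB.restrict W) (hB'.restrict W') hW hW' hWW'

end Extension

end

theorem stmt_1_general {K : Type*} [Field K] [IsAlgClosed K] [Invertible (2 : K)]
    {V V' : Type*} [AddCommGroup V] [Module K V] [FiniteDimensional K V]
    [AddCommGroup V'] [Module K V'] [FiniteDimensional K V']
    {B : BilinForm K V} {B' : BilinForm K V'} {ε : K} (hε : ε = 1 ∨ ε = -1)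
    (hB : IsEpsilonSymm ε B) (hB' : IsEpsilonSymm ε B')
    (hBn : B.Nondegenerate) (hBn' : B'.Nondegenerate) (hVV' : finrank K V = finrank K V')
    (H : Submodule K V) (H' : Submodule K V') (hdim : finrank K H = finrank K H')
    (hrad : finrank K ↥(H ⊓ B.orthogonal H) = finrank K ↥(H' ⊓ B'.orthogonal H')) :
    ∃ g : B.IsometryEquiv B', H.map (g : V →ₗ[K] V') = H' := by
  obtain ⟨e⟩ := equivalent_of_finrank_ker_eq hε (hB.restrict H) (hB'.restrict H') hdim
    (by rw [finrank_ker_restrict hB.isRefl, finrank_ker_restrict hB'.isRefl, hrad])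
  let j' : B.restrict H →bᵢ B' := (subtypeIsometry B' H').comp e.toIsometry
  obtain ⟨g, hg⟩ := exists_isometryEquiv_apply_eq hε hB hB' hBn hBn' hVV' (subtypeIsometry B H) j'
    H.injective_subtype (H'.injective_subtype.comp e.toLinearEquiv.injective)
  refine ⟨g, Submodule.ext fun v => ⟨?_, fun hv => ?_⟩⟩
  · rintro ⟨x, hx, rfl⟩
    exact Set.mem_of_eq_of_mem (hg ⟨x, hx⟩) (e ⟨x, hx⟩).2
  · obtain ⟨x, hx⟩ := e.toLinearEquiv.surjective ⟨v, hv⟩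
    exact ⟨x, x.2, (hg x).trans (congrArg Subtype.val hx)⟩

lemma bperp_eq_orthogonal {V : Type*} [AddCommGroup V] [Module ℂ V] {B : BilinForm ℂ V}
    (hB : B.IsRefl) (H : Submodule ℂ V) : bperp B H = B.orthogonal H :=
  Submodule.ext fun _ => forall₂_congr fun _ _ => hB.eq_iff

/-- Lemma 3.2 (`lem:v4-orbit`), first part: if `H, H'` are subspaces of `V` with
`dim H = dim H'` and `dim (H ∩ H^⊥) = dim (H' ∩ H'^⊥)`, then some isometry of the
nondegenerate symmetric or skew-symmetric form carries `H` to `H'`. -/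
theorem stmt_1 {V : Type*} [AddCommGroup V] [Module ℂ V] [FiniteDimensional ℂ V]
    (B : V →ₗ[ℂ] V →ₗ[ℂ] ℂ)
    (hB : ∀ v, (∀ w, B v w = 0) → v = 0)
    (hrefl : (∀ v w, B v w = B w v) ∨ (∀ v w, B v w = - B w v))
    (H H' : Submodule ℂ V)
    (hdim : finrank ℂ H = finrank ℂ H')
    (hrad : finrank ℂ ↥(H ⊓ bperp B H) = finrank ℂ ↥(H' ⊓ bperp B H')) :
    ∃ g : V ≃ₗ[ℂ] V, (∀ v w, B (g v) (g w) = B v w) ∧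
      Submodule.map (g : V →ₗ[ℂ] V) H = H' := by
  have conclude (ε : ℂ) (hε : ε = 1 ∨ ε = -1) (hsym : IsEpsilonSymm ε B) :
      ∃ g : V ≃ₗ[ℂ] V, (∀ v w, B (g v) (g w) = B v w) ∧ H.map (g : V →ₗ[ℂ] V) = H' := by
    have hBn := hsym.isRefl.nondegenerate_iff_separatingLeft.2 hB
    rw [bperp_eq_orthogonal hsym.isRefl, bperp_eq_orthogonal hsym.isRefl] at hrad
    obtain ⟨g, hg⟩ := stmt_1_general hε hsym hsym hBn hBn rfl H H' hdim hrad
    exact ⟨g.toLinearEquiv, g.map_app', hg⟩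
  rcases hrefl with hsymm | hskew
  · exact conclude 1 (Or.inl rfl) fun v w => by rw [one_mul, hsymm]
  · exact conclude (-1) (Or.inr rfl) fun v w => by rw [neg_one_mul, hskew]
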